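/- arXiv:2303.08368 — 2 statements merged into one kernel-verified Lean document; each statement's English description precedes it below -/
import Mathlib

section
/- (Theorem 1) Let E_tx = E(ε_tx,1,…,ε_tx,K) and E_rx = E(ε_rx,1,…,ε_rx,K), both in ℂ^{K+1}. Then A_k^† (E_tx ⊗ E_rx) = 0 for every k = 1,…,K, and consequently R · (E_tx ⊗ E_rx) = 0; that is, E_tx ⊗ E_rx is a non-signal (noise) subspace vector of the auto-correlation matrix R. -/
open scoped BigOperators

/-- Steering vector `a(ε) ∈ ℂ^{n+1}` with entries `exp(j·i·ε)`, `i = 0,…,n`. -/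
noncomputable def steer (n : ℕ) (ε : ℝ) : Fin (n + 1) → ℂ :=
  fun i => Complex.exp (Complex.I * ((i : ℕ) : ℂ) * (ε : ℂ))

/-- The vector `E(η_1,…,η_m) ∈ ℂ^{m+1}` defined recursively by
`E(η_1) = (1, −exp(j·η_1))` and
`E(η_1,…,η_p) = (E(η_1,…,η_{p−1}), 0) − exp(j·η_p)·(0, E(η_1,…,η_{p−1}))`
(with base case `E() = (1)`, which reproduces the stated base case at `m = 1`). -/
noncomputable def Evec : (m : ℕ) → (Fin m → ℝ) → (Fin (m + 1) → ℂ)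
  | 0, _ => fun _ => 1
  | m + 1, η => fun i =>
      Fin.snoc (α := fun _ => ℂ) (Evec m fun j => η j.castSucc) 0 i -
        Complex.exp (Complex.I * (η (Fin.last m) : ℂ)) *
          Fin.cons (α := fun _ => ℂ) 0 (Evec m fun j => η j.castSucc) i

/-- The cyclic down-shift matrix on `ℂ^{n+1}`: `(Lv)_0 = v_n`, `(Lv)_i = v_{i−1}` for `i ≥ 1`. -/
def Lmat (n : ℕ) : Matrix (Fin (n + 1)) (Fin (n + 1)) ℂ :=
  Matrix.of fun i l => if l = i - 1 then 1 else 0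

/-- Kronecker product of vectors: `(v ⊗ w)_{(i,l)} = v_i · w_l`. -/
def kron {a b : Type*} (v : a → ℂ) (w : b → ℂ) : a × b → ℂ :=
  fun p => v p.1 * w p.2

/-- `x^† y = Σ_i conj(x_i) · y_i`. -/
noncomputable def ip {n : Type*} [Fintype n] (x y : n → ℂ) : ℂ :=
  ∑ i, (starRingEnd ℂ) (x i) * y i

/-- `x^† M y = Σ_{i,l} conj(x_i) · M_{i,l} · y_l`. -/
noncomputable def qf {n : Type*} [Fintype n] (x : n → ℂ) (M : Matrix n n ℂ) (y : n → ℂ) : ℂ :=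
  ∑ i, ∑ l, (starRingEnd ℂ) (x i) * M i l * y l

/-- `E(η_1,…,η_Kp) ∈ ℂ^{Kp+1}` padded with a trailing zero, giving a vector in `ℂ^{Kp+2}`. -/
noncomputable def Epad (Kp : ℕ) (η : Fin Kp → ℝ) : Fin (Kp + 2) → ℂ :=
  Fin.snoc (Evec Kp η) 0

/-- `u_0 = Ẽ_tx ⊗ Ẽ_rx`. -/
noncomputable def u0 (Kp : ℕ) (ηt ηr : Fin Kp → ℝ) : Fin (Kp + 2) × Fin (Kp + 2) → ℂ :=
  kron (Epad Kp ηt) (Epad Kp ηr)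

/-- `u_1 = Ẽ_tx ⊗ (L·Ẽ_rx)`. -/
noncomputable def u1 (Kp : ℕ) (ηt ηr : Fin Kp → ℝ) : Fin (Kp + 2) × Fin (Kp + 2) → ℂ :=
  kron (Epad Kp ηt) ((Lmat (Kp + 1)).mulVec (Epad Kp ηr))

/-- `u_2 = (L·Ẽ_tx) ⊗ Ẽ_rx`. -/
noncomputable def u2 (Kp : ℕ) (ηt ηr : Fin Kp → ℝ) : Fin (Kp + 2) × Fin (Kp + 2) → ℂ :=
  kron ((Lmat (Kp + 1)).mulVec (Epad Kp ηt)) (Epad Kp ηr)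

/-- `u_3 = (L·Ẽ_tx) ⊗ (L·Ẽ_rx)`. -/
noncomputable def u3 (Kp : ℕ) (ηt ηr : Fin Kp → ℝ) : Fin (Kp + 2) × Fin (Kp + 2) → ℂ :=
  kron ((Lmat (Kp + 1)).mulVec (Epad Kp ηt)) ((Lmat (Kp + 1)).mulVec (Epad Kp ηr))

/-- The noiseless auto-correlation matrix `R = Σ_{k=1}^K σ_k² A_k A_k^†`, where
`A_k = a(ε_tx,k) ⊗ a(ε_rx,k)` and `σsq k` is the power `σ_k²`. -/
noncomputable def Rmat (K : ℕ) (εtx εrx σsq : Fin K → ℝ) :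
    Matrix (Fin (K + 1) × Fin (K + 1)) (Fin (K + 1) × Fin (K + 1)) ℂ :=
  Matrix.of fun p q => ∑ k, (σsq k : ℂ) *
    kron (steer K (εtx k)) (steer K (εrx k)) p *
    (starRingEnd ℂ) (kron (steer K (εtx k)) (steer K (εrx k)) q)

/-- The rank-one matrix `R_ε = a(ε) a(ε)^† ∈ ℂ^{(Kp+2)×(Kp+2)}`. -/
noncomputable def Rsingle (Kp : ℕ) (ε : ℝ) : Matrix (Fin (Kp + 2)) (Fin (Kp + 2)) ℂ :=
  Matrix.of fun i l => steer (Kp + 1) ε i * (starRingEnd ℂ) (steer (Kp + 1) ε l)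

/-- The iDEA cost `Q_tx(φ) = (u_1 − exp(j·φ)·u_3)^† R (u_1 − exp(j·φ)·u_3)`. -/
noncomputable def Qcost (Kp : ℕ) (εtx εrx σsq : Fin (Kp + 1) → ℝ)
    (ηt ηr : Fin Kp → ℝ) (φ : ℝ) : ℂ :=
  qf (u1 Kp ηt ηr - Complex.exp (Complex.I * (φ : ℂ)) • u3 Kp ηt ηr)
    (Rmat (Kp + 1) εtx εrx σsq)
    (u1 Kp ηt ηr - Complex.exp (Complex.I * (φ : ℂ)) • u3 Kp ηt ηr)

/-- The closed-form value `4^{2K−1} · Σ_k σ_k² sin²((ε_tx,k − φ)/2) ∏_m sin²((ε_tx,k − ε̂_tx,m)/2)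
∏_n sin²((ε_rx,k − ε̂_rx,n)/2)` (here `K = Kp + 1`, so `2K − 1 = 2·Kp + 1`). -/
noncomputable def Ssum (Kp : ℕ) (εtx εrx σsq : Fin (Kp + 1) → ℝ)
    (ηt ηr : Fin Kp → ℝ) (φ : ℝ) : ℝ :=
  (4 : ℝ) ^ (2 * Kp + 1) * ∑ k, σsq k * Real.sin ((εtx k - φ) / 2) ^ 2 *
    (∏ m, Real.sin ((εtx k - ηt m) / 2) ^ 2) *
    (∏ n, Real.sin ((εrx k - ηr n) / 2) ^ 2)

/-- The `k = K` term of `Ssum`, i.e. the lower bound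
`4^{2K−1} · σ_K² sin²((ε_tx,K − φ)/2) ∏_m sin²((ε_tx,K − ε̂_tx,m)/2) ∏_n sin²((ε_rx,K − ε̂_rx,n)/2)`. -/
noncomputable def Slb (Kp : ℕ) (εtx εrx σsq : Fin (Kp + 1) → ℝ)
    (ηt ηr : Fin Kp → ℝ) (φ : ℝ) : ℝ :=
  (4 : ℝ) ^ (2 * Kp + 1) * σsq (Fin.last Kp) *
    Real.sin ((εtx (Fin.last Kp) - φ) / 2) ^ 2 *
    (∏ m, Real.sin ((εtx (Fin.last Kp) - ηt m) / 2) ^ 2) *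
    (∏ n, Real.sin ((εrx (Fin.last Kp) - ηr n) / 2) ^ 2)

/-! Pairing `E(η_1,…,η_m)` with the steering vector `a(ε)` evaluates the polynomial with coefficient
vector `E(η_1,…,η_m)` at `z = exp(-j·ε)`. The recursion multiplies that polynomial by
`1 - exp(j·η_p)·z`, so it is the product of these linear factors and vanishes as soon as `ε` is one
of the phases. Pairings of Kronecker products factor, hence the transmit factor alone makes `A_k`
orthogonal to `E_tx ⊗ w`, whatever `w` is; and `R` maps into the span of the `A_k` with coefficients
proportional to the pairings with `A_k`. -/

section PowerSum

variable {R : Type*} [Semiring R] {n : ℕ}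

theorem sum_snoc_mul_pow (v : Fin n → R) (x z : R) :
    ∑ i : Fin (n + 1), Fin.snoc (α := fun _ => R) v x i * z ^ (i : ℕ) =
      ∑ i : Fin n, v i * z ^ (i : ℕ) + x * z ^ n := by
  simp [Fin.sum_univ_castSucc]

theorem sum_cons_mul_pow (v : Fin n → R) (x z : R) :
    ∑ i : Fin (n + 1), Fin.cons (α := fun _ => R) x v i * z ^ (i : ℕ) =
      x + (∑ i : Fin n, v i * z ^ (i : ℕ)) * z := by
  simp [Fin.sum_univ_succ, Finset.sum_mul, pow_succ, mul_assoc]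

end PowerSum

theorem sum_Evec_mul_pow (z : ℂ) (m : ℕ) (η : Fin m → ℝ) :
    ∑ i, Evec m η i * z ^ (i : ℕ) = ∏ l, (1 - Complex.exp (Complex.I * η l) * z) := by
  induction m with
  | zero => simp [Evec]
  | succ m ih =>
    simp only [Evec, sub_mul, mul_assoc, Finset.sum_sub_distrib, ← Finset.mul_sum,
      sum_snoc_mul_pow, sum_cons_mul_pow, ih, Fin.prod_univ_castSucc]
    ring

theorem conj_steer_apply (n : ℕ) (ε : ℝ) (i : Fin (n + 1)) :
    (starRingEnd ℂ) (steer n ε i) = Complex.exp (-(Complex.I * ε)) ^ (i : ℕ) := by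
  rw [steer, ← Complex.exp_conj, ← Complex.exp_nat_mul]
  congr 1
  simp only [map_mul, Complex.conj_I, Complex.conj_ofReal, map_natCast]
  ring

theorem ip_steer_Evec (m : ℕ) (ε : ℝ) (η : Fin m → ℝ) :
    ip (steer m ε) (Evec m η) = ∏ l, (1 - Complex.exp (Complex.I * (η l - ε))) := by
  simp only [ip, conj_steer_apply, mul_comm _ (Evec m η _), sum_Evec_mul_pow]
  simp only [← Complex.exp_add, mul_sub, ← sub_eq_add_neg]

theorem ip_steer_Evec_eq_zero {m : ℕ} (η : Fin m → ℝ) (k : Fin m) :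
    ip (steer m (η k)) (Evec m η) = 0 := by
  rw [ip_steer_Evec]
  exact Finset.prod_eq_zero (Finset.mem_univ k) (by simp)

theorem ip_kron {a b : Type*} [Fintype a] [Fintype b] (v v' : a → ℂ) (w w' : b → ℂ) :
    ip (kron v w) (kron v' w') = ip v v' * ip w w' := by
  simp only [ip, kron, map_mul, mul_mul_mul_comm, Fintype.sum_prod_type, Finset.sum_mul_sum]

theorem Rmat_mulVec (K : ℕ) (εtx εrx σsq : Fin K → ℝ) (u : Fin (K + 1) × Fin (K + 1) → ℂ) :
    (Rmat K εtx εrx σsq).mulVec u =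
      ∑ k, ((σsq k : ℂ) * ip (kron (steer K (εtx k)) (steer K (εrx k))) u) •
        kron (steer K (εtx k)) (steer K (εrx k)) := by
  ext p
  simp only [Matrix.mulVec, dotProduct, Rmat, Matrix.of_apply, ip, Finset.sum_apply,
    Pi.smul_apply, smul_eq_mul, Finset.sum_mul, Finset.mul_sum]
  rw [Finset.sum_comm]
  refine Finset.sum_congr rfl fun k _ => Finset.sum_congr rfl fun q _ => ?_
  ring

theorem statement3_general (K : ℕ) (εtx εrx σsq : Fin K → ℝ) (w : Fin (K + 1) → ℂ) :
    (∀ k : Fin K,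
        ip (kron (steer K (εtx k)) (steer K (εrx k))) (kron (Evec K εtx) w) = 0) ∧
    (Rmat K εtx εrx σsq).mulVec (kron (Evec K εtx) w) = 0 := by
  have orthogonal (k : Fin K) :
      ip (kron (steer K (εtx k)) (steer K (εrx k))) (kron (Evec K εtx) w) = 0 := by
    rw [ip_kron, ip_steer_Evec_eq_zero, zero_mul]
  refine ⟨orthogonal, ?_⟩
  simp only [Rmat_mulVec, orthogonal, mul_zero, zero_smul, Finset.sum_const_zero]

/-- Theorem 1: A_k^† (E_tx ⊗ E_rx) = 0 for every k, and consequently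
R · (E_tx ⊗ E_rx) = 0. -/
theorem statement3 (K : ℕ) (hK : 2 ≤ K) (εtx εrx : Fin K → ℝ) (σsq : Fin K → ℝ)
    (hσ : ∀ k, 0 < σsq k) :
    (∀ k : Fin K,
        ip (kron (steer K (εtx k)) (steer K (εrx k)))
          (kron (Evec K εtx) (Evec K εrx)) = 0) ∧
    (Rmat K εtx εrx σsq).mulVec (kron (Evec K εtx) (Evec K εrx)) = 0 :=
  statement3_general K εtx εrx σsq (Evec K εrx)
end

section
/- (Theorem 2, part 3) The vector u_0 − exp(j·ε_tx,K)·exp(j·ε_rx,K)·u_3 belongs to the non-signal subspace of the noiseless auto-correlation matrix: R · (u_0 − exp(j·ε_tx,K)·exp(j·ε_rx,K)·u_3) = 0. -/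
open scoped BigOperators

/-!
The pairing `a(ε)† v` evaluates the polynomial with coefficients `v` at `exp(−j·ε)`. At `Ẽ` it is
`∏ m, (1 − exp(j·(η_m − ε)))`, and the shift `L` multiplies it by `exp(−j·ε)`. Hence
`A_k† (u_0 − exp(j·φ)·exp(j·ψ)·u_3)` is the product of the two array factors with
`1 − exp(j·(φ − ε_tx,k))·exp(j·(ψ − ε_rx,k))`. The last factor vanishes for the source `K`, and for
each other source it is enough that one of the two array factors vanishes.
-/

open scoped Matrix

section ZeroPadding

variable {α : Type*} [NonUnitalNonAssocSemiring α] {n : ℕ}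

lemma dotProduct_snoc_zero (v : Fin (n + 1) → α) (w : Fin n → α) :
    v ⬝ᵥ Fin.snoc (α := fun _ => α) w 0 = Fin.init v ⬝ᵥ w := by
  simp [dotProduct, Fin.sum_univ_castSucc, Fin.init]

lemma dotProduct_cons_zero (v : Fin (n + 1) → α) (w : Fin n → α) :
    v ⬝ᵥ Fin.cons (α := fun _ => α) 0 w = Fin.tail v ⬝ᵥ w := by
  simp [dotProduct, Fin.sum_univ_succ, Fin.tail]

end ZeroPadding

lemma Lmat_mulVec_apply (n : ℕ) (v : Fin (n + 1) → ℂ) (i : Fin (n + 1)) :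
    (Lmat n *ᵥ v) i = v (i - 1) := by
  simp [Matrix.mulVec, dotProduct, Lmat]

lemma Lmat_mulVec_snoc {n : ℕ} (v : Fin n → ℂ) (c : ℂ) :
    Lmat n *ᵥ Fin.snoc (α := fun _ => ℂ) v c = Fin.cons (α := fun _ => ℂ) c v := by
  ext i
  rw [Lmat_mulVec_apply]
  cases i using Fin.cases with
  | zero =>
    have hlast : (0 - 1 : Fin (n + 1)) = Fin.last n := by
      rw [sub_eq_iff_eq_add, Fin.last_add_one]
    rw [hlast, Fin.snoc_last, Fin.cons_zero]
  | succ j =>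
    have hpred : j.succ - 1 = j.castSucc := by simp [sub_eq_iff_eq_add]
    rw [hpred, Fin.snoc_castSucc, Fin.cons_succ]

lemma init_star_steer (n : ℕ) (ε : ℝ) :
    Fin.init (α := fun _ => ℂ) (star (steer (n + 1) ε)) = star (steer n ε) :=
  rfl

lemma tail_star_steer (n : ℕ) (ε : ℝ) :
    Fin.tail (α := fun _ => ℂ) (star (steer (n + 1) ε)) =
      Complex.exp (-(Complex.I * ε)) • star (steer n ε) := by
  ext i
  simp only [Fin.tail, Pi.star_apply, Pi.smul_apply, smul_eq_mul, steer, Fin.val_succ,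
    Complex.star_def, ← Complex.exp_conj, ← Complex.exp_add, map_mul, Complex.conj_I,
    Complex.conj_ofReal, map_natCast]
  push_cast
  ring_nf

lemma star_steer_dotProduct_snoc_zero {n : ℕ} (ε : ℝ) (v : Fin (n + 1) → ℂ) :
    star (steer (n + 1) ε) ⬝ᵥ Fin.snoc (α := fun _ => ℂ) v 0 = star (steer n ε) ⬝ᵥ v := by
  rw [dotProduct_snoc_zero, init_star_steer]

lemma star_steer_dotProduct_cons_zero {n : ℕ} (ε : ℝ) (v : Fin (n + 1) → ℂ) :
    star (steer (n + 1) ε) ⬝ᵥ Fin.cons (α := fun _ => ℂ) 0 v =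
      Complex.exp (-(Complex.I * ε)) * (star (steer n ε) ⬝ᵥ v) := by
  rw [dotProduct_cons_zero, tail_star_steer, smul_dotProduct, smul_eq_mul]

lemma Evec_succ (m : ℕ) (η : Fin (m + 1) → ℝ) :
    Evec (m + 1) η = Fin.snoc (α := fun _ => ℂ) (Evec m fun j => η j.castSucc) 0 -
      Complex.exp (Complex.I * η (Fin.last m)) •
        Fin.cons (α := fun _ => ℂ) 0 (Evec m fun j => η j.castSucc) :=
  rfl

lemma exp_I_mul_mul_exp_neg_I_mul (φ ε : ℝ) :
    Complex.exp (Complex.I * φ) * Complex.exp (-(Complex.I * ε)) =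
      Complex.exp (Complex.I * (φ - ε)) := by
  rw [← Complex.exp_add, mul_sub, sub_eq_add_neg]

lemma star_steer_dotProduct_Evec (m : ℕ) (ε : ℝ) (η : Fin m → ℝ) :
    star (steer m ε) ⬝ᵥ Evec m η = ∏ k, (1 - Complex.exp (Complex.I * (η k - ε))) := by
  induction m with
  | zero => simp [dotProduct, steer, Evec]
  | succ m ih =>
    rw [Evec_succ, dotProduct_sub, dotProduct_smul, star_steer_dotProduct_snoc_zero,
      star_steer_dotProduct_cons_zero, smul_eq_mul, ← mul_assoc, exp_I_mul_mul_exp_neg_I_mul, ih,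
      Fin.prod_univ_castSucc]
    ring

lemma star_steer_dotProduct_Epad (m : ℕ) (ε : ℝ) (η : Fin m → ℝ) :
    star (steer (m + 1) ε) ⬝ᵥ Epad m η = ∏ k, (1 - Complex.exp (Complex.I * (η k - ε))) := by
  rw [Epad, star_steer_dotProduct_snoc_zero, star_steer_dotProduct_Evec]

lemma star_steer_dotProduct_Lmat_mulVec_Epad (m : ℕ) (ε : ℝ) (η : Fin m → ℝ) :
    star (steer (m + 1) ε) ⬝ᵥ (Lmat (m + 1) *ᵥ Epad m η) =
      Complex.exp (-(Complex.I * ε)) * ∏ k, (1 - Complex.exp (Complex.I * (η k - ε))) := by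
  rw [Epad, Lmat_mulVec_snoc, star_steer_dotProduct_cons_zero, star_steer_dotProduct_Evec]

lemma star_kron_dotProduct_kron {a b : Type*} [Fintype a] [Fintype b]
    (v v' : a → ℂ) (w w' : b → ℂ) :
    star (kron v w) ⬝ᵥ kron v' w' = (star v ⬝ᵥ v') * (star w ⬝ᵥ w') := by
  simp only [dotProduct, kron, Pi.star_apply, star_mul', Fintype.sum_prod_type,
    Finset.sum_mul_sum, mul_mul_mul_comm]

lemma star_kron_steer_dotProduct_u0_sub_smul_u3 (Kp : ℕ) (εt εr φ ψ : ℝ) (ηt ηr : Fin Kp → ℝ) :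
    star (kron (steer (Kp + 1) εt) (steer (Kp + 1) εr)) ⬝ᵥ
        (u0 Kp ηt ηr -
          (Complex.exp (Complex.I * φ) * Complex.exp (Complex.I * ψ)) • u3 Kp ηt ηr) =
      (1 - Complex.exp (Complex.I * (φ - εt)) * Complex.exp (Complex.I * (ψ - εr))) *
        (∏ k, (1 - Complex.exp (Complex.I * (ηt k - εt)))) *
        ∏ k, (1 - Complex.exp (Complex.I * (ηr k - εr))) := by
  rw [u0, u3, dotProduct_sub, dotProduct_smul, star_kron_dotProduct_kron,
    star_kron_dotProduct_kron, star_steer_dotProduct_Epad, star_steer_dotProduct_Epad,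
    star_steer_dotProduct_Lmat_mulVec_Epad, star_steer_dotProduct_Lmat_mulVec_Epad,
    ← exp_I_mul_mul_exp_neg_I_mul φ, ← exp_I_mul_mul_exp_neg_I_mul ψ, smul_eq_mul]
  ring

lemma prod_one_sub_exp_eq_zero {m : ℕ} {η : Fin m → ℝ} {ε : ℝ} (hε : ε ∈ Set.range η) :
    ∏ k, (1 - Complex.exp (Complex.I * (η k - ε))) = 0 := by
  obtain ⟨k, rfl⟩ := hε
  exact Finset.prod_eq_zero (Finset.mem_univ k) (by simp)

lemma Rmat_eq_sum_vecMulVec (K : ℕ) (εtx εrx σsq : Fin K → ℝ) :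
    Rmat K εtx εrx σsq = ∑ k, (σsq k : ℂ) •
      Matrix.vecMulVec (kron (steer K (εtx k)) (steer K (εrx k)))
        (star (kron (steer K (εtx k)) (steer K (εrx k)))) := by
  ext p q
  simp [Rmat, Matrix.sum_apply, Matrix.vecMulVec_apply, mul_assoc]

lemma Rmat_mulVec_eq_zero {K : ℕ} {εtx εrx : Fin K → ℝ} (σsq : Fin K → ℝ)
    {v : Fin (K + 1) × Fin (K + 1) → ℂ}
    (hv : ∀ k, star (kron (steer K (εtx k)) (steer K (εrx k))) ⬝ᵥ v = 0) :
    Rmat K εtx εrx σsq *ᵥ v = 0 := by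
  simp [Rmat_eq_sum_vecMulVec, Matrix.sum_mulVec, Matrix.smul_mulVec, Matrix.vecMulVec_mulVec, hv]

theorem statement8_general (Kp : ℕ) (εtx εrx : Fin (Kp + 1) → ℝ) (σsq : Fin (Kp + 1) → ℝ)
    (ηt ηr : Fin Kp → ℝ)
    (hη : ∀ k : Fin Kp, εtx k.castSucc ∈ Set.range ηt ∨ εrx k.castSucc ∈ Set.range ηr) :
    Rmat (Kp + 1) εtx εrx σsq *ᵥ
      (u0 Kp ηt ηr - (Complex.exp (Complex.I * εtx (Fin.last Kp)) *
        Complex.exp (Complex.I * εrx (Fin.last Kp))) • u3 Kp ηt ηr) = 0 := by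
  refine Rmat_mulVec_eq_zero σsq fun k => ?_
  rw [star_kron_steer_dotProduct_u0_sub_smul_u3]
  cases k using Fin.lastCases with
  | last => simp
  | cast k =>
    obtain htx | hrx := hη k
    · rw [prod_one_sub_exp_eq_zero htx, mul_zero, zero_mul]
    · rw [prod_one_sub_exp_eq_zero hrx, mul_zero]

/-- Theorem 2, part 3: R · (u_0 − exp(j·ε_tx,K)·exp(j·ε_rx,K)·u_3) = 0. -/
theorem statement8 (Kp : ℕ) (hKp : 1 ≤ Kp) (εtx εrx : Fin (Kp + 1) → ℝ)
    (σsq : Fin (Kp + 1) → ℝ) (hσ : ∀ k, 0 < σsq k) :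
    (Rmat (Kp + 1) εtx εrx σsq).mulVec
      (u0 Kp (fun i => εtx i.castSucc) (fun i => εrx i.castSucc) - (Complex.exp (Complex.I * (εtx (Fin.last Kp) : ℂ)) * Complex.exp (Complex.I * (εrx (Fin.last Kp) : ℂ))) • u3 Kp (fun i => εtx i.castSucc) (fun i => εrx i.castSucc)) = 0 :=
  statement8_general Kp εtx εrx σsq _ _ fun k => .inl ⟨k, rfl⟩
end
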